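/- Let X₁,...,X_N be i.i.d. with density f w.r.t. λ satisfying condition H(p): (∫|f_k|^{2p}dλ)^{1/p} ≤ c_k∫|f_k|²dλ and (∫ f^q dλ)^{1/q} ≤ c, where 1/p+1/q=1, and set C_k = c_k c, D_k = ∫ f_k² dλ. Then for any ε > 0, with probability at least 1 − ε, simultaneously for all k ∈ {1,...,m}: |(1/N)∑_{i=1}^N f_k(X_i) − E[f_k(X)]| ≤ 2√((1+log(2m/ε))·((1/N)∑_{i=1}^N f_k(X_i)² + C_k D_k)/N). -/

import Mathlib

open MeasureTheory

/-!
Let `d i = Y i - Y' i`, where `Y'` is an independent copy of `Y`. The law of `d` is invariant under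
sign changes, and `u ^ 2 / 2 - L ≤ 2 * exp (-(2 * L + 1 / 2)) * cosh (√(2 * L + 1) * u)`. For the
self-normalized sum `T = (∑ d i) / √(∑ d i ^ 2)`, averaging `cosh (t * T)` over the signs gives at
most `exp (t ^ 2 / 2)`, so the positive part of `T ^ 2 / 2 - L` has expectation at most
`2 * exp (-L)`.

Integrate over the copy alone, writing `E'` for this expectation. By Cauchy–Schwarz,
`(∑ (Y i - E Y i)) ^ 2 = (E' ∑ d i) ^ 2 ≤ E' (T ^ 2) * ∑ E' (d i ^ 2)`. If the left-hand side
exceeds `2 * (1 + L) * ∑ E' (d i ^ 2)`, then `E' (T ^ 2 / 2 - L) > 1`, an event of probability at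
most `2 * exp (-L)` by Markov's inequality. Hölder's inequality bounds the second moments entering
`E' (d i ^ 2)`, and a union bound with `L = log (2 * m / ε)` concludes.
-/

open ProbabilityTheory

section Signs

lemma sq_half_sub_le_exp_mul_cosh {L : ℝ} (hL : 0 ≤ L) (u : ℝ) :
    u ^ 2 / 2 - L ≤ 2 * Real.exp (-(2 * L + 1 / 2)) * Real.cosh (√(2 * L + 1) * u) := by
  set a := √(2 * L + 1)
  have ha_sq : a ^ 2 = 2 * L + 1 := Real.sq_sqrt (by linarith)
  have ha_one : 1 ≤ a := Real.one_le_sqrt.2 (by linarith)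
  set v := a * |u| - (2 * L + 1 / 2) with hv
  have hquad : u ^ 2 / 2 - L ≤ Real.exp v := by
    rw [← sq_abs u]
    rcases le_total a |u| with hau | hau
    · calc |u| ^ 2 / 2 - L ≤ 1 + v + v ^ 2 / 2 := by nlinarith
        _ ≤ Real.exp v := Real.quadratic_le_exp_of_nonneg (by nlinarith)
    · calc |u| ^ 2 / 2 - L ≤ (v + 1) / 2 := by nlinarith [abs_nonneg u]
        _ ≤ Real.exp v := by linarith [Real.add_one_le_exp v, Real.exp_pos v]
  calc u ^ 2 / 2 - L ≤ Real.exp (-(2 * L + 1 / 2)) * Real.exp (a * |u|) := by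
        rwa [← Real.exp_add, neg_add_eq_sub]
    _ ≤ Real.exp (-(2 * L + 1 / 2)) * (2 * Real.cosh (a * |u|)) := by
        gcongr
        rw [Real.cosh_eq]
        linarith [Real.exp_pos (-(a * |u|))]
    _ = 2 * Real.exp (-(2 * L + 1 / 2)) * Real.cosh (a * u) := by
        rw [← Real.cosh_abs (a * u), abs_mul, abs_of_nonneg (by positivity : 0 ≤ a)]
        ring

variable {ι : Type*} [Fintype ι] [DecidableEq ι]

lemma sum_exp_sum_units_smul (d : ι → ℝ) :
    ∑ ε : ι → ℤˣ, Real.exp (∑ i, ε i • d i) = ∏ i, (2 * Real.cosh (d i)) := by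
  simp_rw [Real.exp_sum]
  rw [← Fintype.piFinset_univ,
    ← Finset.prod_univ_sum (fun _ => Finset.univ) fun i (s : ℤˣ) => Real.exp (s • d i)]
  refine Finset.prod_congr rfl fun i _ => ?_
  rw [Real.cosh_eq, UnitsInt.univ, Finset.sum_pair (by decide), one_smul, Units.neg_smul, one_smul]
  ring

lemma sum_cosh_sum_units_smul (d : ι → ℝ) :
    ∑ ε : ι → ℤˣ, Real.cosh (∑ i, ε i • d i) = ∏ i, (2 * Real.cosh (d i)) := by
  have hneg : ∑ ε : ι → ℤˣ, Real.exp (-∑ i, ε i • d i) = ∏ i, (2 * Real.cosh (d i)) := by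
    simpa only [smul_neg, Finset.sum_neg_distrib, Real.cosh_neg]
      using sum_exp_sum_units_smul fun i => -d i
  simp_rw [Real.cosh_eq]
  rw [← Finset.sum_div, Finset.sum_add_distrib, sum_exp_sum_units_smul, hneg, add_self_div_two]
  simp_rw [Real.cosh_eq]

lemma sum_cosh_sum_units_smul_le (d : ι → ℝ) :
    ∑ ε : ι → ℤˣ, Real.cosh (∑ i, ε i • d i)
      ≤ Fintype.card (ι → ℤˣ) * Real.exp ((∑ i, d i ^ 2) / 2) := by
  rw [sum_cosh_sum_units_smul, Finset.prod_mul_distrib, Finset.sum_div, Real.exp_sum]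
  simp only [Finset.prod_const, Finset.card_univ, Fintype.card_fun, Fintype.card_units_int,
    Nat.cast_pow, Nat.cast_ofNat]
  gcongr with i
  exact Real.cosh_le_exp_half_sq (d i)

end Signs

section SelfNormalized

variable {ι : Type*} [Fintype ι]

/-- The sum of a finite family divided by its Euclidean norm: under random signs it is sub-Gaussian,
uniformly in `d`. The value is `0` for `d = 0`, as `x / 0 = 0`. -/
noncomputable def selfNormalizedSum (d : ι → ℝ) : ℝ :=
  (∑ i, d i) / √(∑ i, d i ^ 2)

@[fun_prop]
lemma measurable_selfNormalizedSum : Measurable (selfNormalizedSum (ι := ι)) := by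
  unfold selfNormalizedSum
  fun_prop

lemma sq_sum_eq_sq_selfNormalizedSum_mul (d : ι → ℝ) :
    (∑ i, d i) ^ 2 = selfNormalizedSum d ^ 2 * ∑ i, d i ^ 2 := by
  have hS : 0 ≤ ∑ i, d i ^ 2 := Finset.sum_nonneg fun i _ => sq_nonneg (d i)
  rw [selfNormalizedSum, div_pow, Real.sq_sqrt hS]
  refine (div_mul_cancel_of_imp fun hS0 => ?_).symm
  have hcs : (∑ i, d i) ^ 2 ≤ Fintype.card ι * ∑ i, d i ^ 2 := sq_sum_le_card_mul_sum_sq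
  exact le_antisymm (by simpa [hS0] using hcs) (sq_nonneg _)

lemma sq_selfNormalizedSum_le_card (d : ι → ℝ) :
    selfNormalizedSum d ^ 2 ≤ Fintype.card ι := by
  have hS : 0 ≤ ∑ i, d i ^ 2 := Finset.sum_nonneg fun i _ => sq_nonneg (d i)
  rw [selfNormalizedSum, div_pow, Real.sq_sqrt hS]
  exact div_le_of_le_mul₀ hS (Nat.cast_nonneg _) sq_sum_le_card_mul_sum_sq

lemma selfNormalizedSum_units_smul (ε : ι → ℤˣ) (d : ι → ℝ) :
    selfNormalizedSum (ε • d) = ∑ i, ε i • (d i / √(∑ j, d j ^ 2)) := by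
  have hsq (i : ι) : (ε i • d i) ^ 2 = d i ^ 2 := by
    rcases Int.units_eq_one_or (ε i) with h | h <;> simp [h]
  simp only [selfNormalizedSum, Pi.smul_apply', hsq, Finset.sum_div]
  simp only [Units.smul_def, smul_div_assoc]

lemma sum_ofReal_sq_selfNormalizedSum_units_smul_le [DecidableEq ι] (d : ι → ℝ)
    {L : ℝ} (hL : 0 ≤ L) :
    ∑ ε : ι → ℤˣ, ENNReal.ofReal (selfNormalizedSum (ε • d) ^ 2 / 2 - L)
      ≤ Fintype.card (ι → ℤˣ) * ENNReal.ofReal (2 * Real.exp (-L)) := by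
  set a := √(2 * L + 1)
  set κ := 2 * Real.exp (-(2 * L + 1 / 2))
  set e : ι → ℝ := fun i => a * (d i / √(∑ j, d j ^ 2))
  have he : ∑ i, e i ^ 2 ≤ 2 * L + 1 := by
    have hS : 0 ≤ ∑ i, d i ^ 2 := Finset.sum_nonneg fun i _ => sq_nonneg (d i)
    simp only [e, a, mul_pow, div_pow, Real.sq_sqrt hS, ← Finset.mul_sum, ← Finset.sum_div]
    rw [Real.sq_sqrt (by positivity)]
    exact mul_le_of_le_one_right (by positivity) (div_self_le_one _)
  have hpt (ε : ι → ℤˣ) :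
      selfNormalizedSum (ε • d) ^ 2 / 2 - L ≤ κ * Real.cosh (∑ i, ε i • e i) := by
    refine (sq_half_sub_le_exp_mul_cosh hL _).trans_eq ?_
    rw [selfNormalizedSum_units_smul, Finset.mul_sum]
    simp only [e, κ, a, mul_smul_comm]
  have hsum : ∑ ε : ι → ℤˣ, κ * Real.cosh (∑ i, ε i • e i)
      ≤ Fintype.card (ι → ℤˣ) * (2 * Real.exp (-L)) := by
    calc ∑ ε : ι → ℤˣ, κ * Real.cosh (∑ i, ε i • e i)
        ≤ κ * (Fintype.card (ι → ℤˣ) * Real.exp ((∑ i, e i ^ 2) / 2)) := by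
          rw [← Finset.mul_sum]
          gcongr
          exact sum_cosh_sum_units_smul_le e
      _ ≤ κ * (Fintype.card (ι → ℤˣ) * Real.exp ((2 * L + 1) / 2)) := by gcongr
      _ = Fintype.card (ι → ℤˣ) * (2 * Real.exp (-L)) := by
          rw [show -L = -(2 * L + 1 / 2) + (2 * L + 1) / 2 by ring, Real.exp_add]
          ring
  calc ∑ ε : ι → ℤˣ, ENNReal.ofReal (selfNormalizedSum (ε • d) ^ 2 / 2 - L)
      ≤ ∑ ε : ι → ℤˣ, ENNReal.ofReal (κ * Real.cosh (∑ i, ε i • e i)) :=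
        Finset.sum_le_sum fun ε _ => ENNReal.ofReal_le_ofReal (hpt ε)
    _ = ENNReal.ofReal (∑ ε : ι → ℤˣ, κ * Real.cosh (∑ i, ε i • e i)) :=
        (ENNReal.ofReal_sum_of_nonneg fun ε _ => by positivity).symm
    _ ≤ ENNReal.ofReal (Fintype.card (ι → ℤˣ) * (2 * Real.exp (-L))) :=
        ENNReal.ofReal_le_ofReal hsum
    _ = Fintype.card (ι → ℤˣ) * ENNReal.ofReal (2 * Real.exp (-L)) := by
        rw [ENNReal.ofReal_mul (Nat.cast_nonneg _), ENNReal.ofReal_natCast]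

end SelfNormalized

lemma lintegral_le_of_sum_smul_le {G α : Type*} [Group G] [Fintype G] [MeasurableSpace α]
    [MulAction G α] [MeasurableConstSMul G α] {μ : Measure α} [IsProbabilityMeasure μ]
    [SMulInvariantMeasure G α μ] {F : α → ENNReal} (hF : Measurable F) {B : ENNReal}
    (hB : ∀ x, ∑ g : G, F (g • x) ≤ Fintype.card G * B) :
    ∫⁻ x, F x ∂μ ≤ B := by
  have hcard : (Fintype.card G : ENNReal) ≠ 0 := Nat.cast_ne_zero.2 Fintype.card_ne_zero
  rw [← ENNReal.mul_le_mul_iff_right hcard (ENNReal.natCast_ne_top _)]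
  calc Fintype.card G * ∫⁻ x, F x ∂μ = ∑ g : G, ∫⁻ x, F (g • x) ∂μ := by
        simp only [(measurePreserving_smul _ μ).lintegral_comp hF, Finset.sum_const,
          Finset.card_univ, nsmul_eq_mul]
    _ = ∫⁻ x, ∑ g : G, F (g • x) ∂μ :=
        (lintegral_finsetSum _ fun g _ => hF.comp (measurable_const_smul g)).symm
    _ ≤ ∫⁻ _, Fintype.card G * B ∂μ := lintegral_mono hB
    _ = Fintype.card G * B := by rw [lintegral_const, measure_univ, mul_one]

section Symmetrization

/-- The law of `X - X'` for independent `X` and `X'` of law `μ`, used to insert random signs. It is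
encoded as a push-forward of the product measure, for an arbitrary measure `μ`. -/
noncomputable def symmetrizedLaw {G : Type*} [MeasurableSpace G] [Sub G] (μ : Measure G) :
    Measure G :=
  (μ.prod μ).map fun x => x.1 - x.2

section AddGroup

variable {G : Type*} [AddGroup G] [MeasurableSpace G]

instance isProbabilityMeasure_symmetrizedLaw [MeasurableSub₂ G] (μ : Measure G)
    [IsProbabilityMeasure μ] : IsProbabilityMeasure (symmetrizedLaw μ) :=
  Measure.isProbabilityMeasure_map (by fun_prop)

instance isNegInvariant_symmetrizedLaw [MeasurableNeg G] [MeasurableSub₂ G] (μ : Measure G)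
    [SFinite μ] : (symmetrizedLaw μ).IsNegInvariant where
  neg_eq_self := by
    rw [Measure.neg, symmetrizedLaw, Measure.map_map (by fun_prop) (by fun_prop)]
    nth_rw 2 [← Measure.prod_swap]
    rw [Measure.map_map (by fun_prop) (by fun_prop)]
    congr 1
    ext x
    simp

end AddGroup

instance smulInvariantMeasure_units_int {G : Type*} [AddCommGroup G] [MeasurableSpace G]
    [MeasurableNeg G] (μ : Measure G) [μ.IsNegInvariant] : SMulInvariantMeasure ℤˣ G μ where
  measure_preimage_smul ε s _ := by
    rcases Int.units_eq_one_or ε with rfl | rfl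
    · simp
    · simp [Units.neg_smul]

instance measurableConstSMul_pi {ι : Type*} {M α : ι → Type*} [∀ i, MeasurableSpace (α i)]
    [∀ i, SMul (M i) (α i)] [∀ i, MeasurableConstSMul (M i) (α i)] :
    MeasurableConstSMul (∀ i, M i) (∀ i, α i) where
  measurable_const_smul c :=
    measurable_pi_lambda _ fun i => (measurable_const_smul (c i)).comp (measurable_pi_apply i)

variable {ι : Type*} [Fintype ι]

instance smulInvariantMeasure_pi {M α : ι → Type*} [∀ i, MeasurableSpace (α i)]
    [∀ i, SMul (M i) (α i)] [∀ i, MeasurableConstSMul (M i) (α i)] (μ : ∀ i, Measure (α i))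
    [∀ i, SigmaFinite (μ i)] [∀ i, SMulInvariantMeasure (M i) (α i) (μ i)] :
    SMulInvariantMeasure (∀ i, M i) (∀ i, α i) (Measure.pi μ) where
  measure_preimage_smul c _ hs :=
    (measurePreserving_pi μ μ fun i => measurePreserving_smul (c i) (μ i)).measure_preimage
      hs.nullMeasurableSet

lemma lintegral_ofReal_sq_selfNormalizedSum_le (ρ : ι → Measure ℝ)
    [∀ i, IsProbabilityMeasure (ρ i)] [∀ i, (ρ i).IsNegInvariant] {L : ℝ} (hL : 0 ≤ L) :
    ∫⁻ d, ENNReal.ofReal (selfNormalizedSum d ^ 2 / 2 - L) ∂Measure.pi ρ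
      ≤ ENNReal.ofReal (2 * Real.exp (-L)) := by
  classical
  exact lintegral_le_of_sum_smul_le (G := ι → ℤˣ) (by fun_prop)
    fun d => sum_ofReal_sq_selfNormalizedSum_units_smul_le d hL

variable {G : Type*} [AddGroup G] [MeasurableSpace G] [MeasurableSub₂ G]

lemma measurePreserving_sub_pi_prod_pi (μ : ι → Measure G) [∀ i, IsProbabilityMeasure (μ i)] :
    MeasurePreserving (fun x : (ι → G) × (ι → G) => x.1 - x.2)
      ((Measure.pi μ).prod (Measure.pi μ)) (Measure.pi fun i => symmetrizedLaw (μ i)) := by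
  have hsub : MeasurePreserving (fun (z : ι → G × G) i => (z i).1 - (z i).2)
      (Measure.pi fun i => (μ i).prod (μ i)) (Measure.pi fun i => symmetrizedLaw (μ i)) :=
    measurePreserving_pi _ _ fun i =>
      Measurable.measurePreserving (by fun_prop : Measurable fun x : G × G => x.1 - x.2) _
  exact hsub.comp (measurePreserving_arrowProdEquivProdArrow G G ι μ μ).symm

variable {Ω : Type*} [MeasurableSpace Ω] {μ : Measure Ω} [IsProbabilityMeasure μ]
  {Y : ι → Ω → G}

lemma hasLaw_sub_independent_copy (hY : ∀ i, AEMeasurable (Y i) μ) (hindep : iIndepFun Y μ) :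
    HasLaw (fun (z : Ω × Ω) i => Y i z.1 - Y i z.2)
      (Measure.pi fun i => symmetrizedLaw (μ.map (Y i))) (μ.prod μ) := by
  have (i : ι) : IsProbabilityMeasure (μ.map (Y i)) := Measure.isProbabilityMeasure_map (hY i)
  have hpi : HasLaw (fun ω i => Y i ω) (Measure.pi fun i => μ.map (Y i)) μ :=
    hindep.hasLaw_pi fun i => ⟨hY i, rfl⟩
  have hpair := (indepFun_prod₀ hpi.aemeasurable hpi.aemeasurable).hasLaw_prod
    (hpi.comp measurePreserving_fst.hasLaw) (hpi.comp measurePreserving_snd.hasLaw)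
  exact (measurePreserving_sub_pi_prod_pi _).comp_hasLaw hpair

end Symmetrization

section Deviation

lemma sq_integral_le_integral_mul_integral {Ω : Type*} [MeasurableSpace Ω] {μ : Measure Ω}
    {D S W : Ω → ℝ} (hD : Integrable D μ) (hS : Integrable S μ) (hW : Integrable W μ)
    (hS_nonneg : 0 ≤ S) (hW_nonneg : 0 ≤ W) (hDWS : ∀ ω, D ω ^ 2 ≤ W ω * S ω) :
    (∫ ω, D ω ∂μ) ^ 2 ≤ (∫ ω, W ω ∂μ) * ∫ ω, S ω ∂μ := by
  have hquad (r : ℝ) :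
      0 ≤ (∫ ω, S ω ∂μ) * (r * r) + 2 * (∫ ω, D ω ∂μ) * r + ∫ ω, W ω ∂μ := by
    calc 0 ≤ ∫ ω, (S ω * (r * r) + 2 * D ω * r + W ω) ∂μ := by
          refine integral_nonneg fun ω => ?_
          rcases (hS_nonneg ω).eq_or_lt with hS0 | hS0
          · have hD0 : D ω = 0 := pow_eq_zero_iff two_ne_zero |>.1 <|
              le_antisymm (by simpa [← hS0] using hDWS ω) (sq_nonneg _)
            simpa [← hS0, hD0] using hW_nonneg ω
          · refine nonneg_of_mul_nonneg_right (a := S ω) ?_ hS0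
            linarith [hDWS ω, sq_nonneg (S ω * r + D ω)]
      _ = (∫ ω, S ω ∂μ) * (r * r) + 2 * (∫ ω, D ω ∂μ) * r + ∫ ω, W ω ∂μ := by
          have hSr : Integrable (fun ω => S ω * (r * r)) μ := hS.mul_const _
          have hDr : Integrable (fun ω => 2 * D ω * r) μ := (hD.const_mul 2).mul_const r
          have hSDr : Integrable (fun ω => S ω * (r * r) + 2 * D ω * r) μ := hSr.add hDr
          rw [integral_add hSDr hW, integral_add hSr hDr, integral_mul_const, integral_mul_const,
            integral_const_mul]
  have hdiscrim := discrim_le_zero hquad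
  rw [discrim] at hdiscrim
  linarith

lemma ofReal_integral_le_lintegral_ofReal {Ω : Type*} [MeasurableSpace Ω] {μ : Measure Ω}
    {f : Ω → ℝ} (hf : Integrable f μ) :
    ENNReal.ofReal (∫ ω, f ω ∂μ) ≤ ∫⁻ ω, ENNReal.ofReal (f ω) ∂μ := by
  rw [integral_eq_lintegral_pos_part_sub_lintegral_neg_part hf]
  exact (ENNReal.ofReal_le_ofReal (sub_le_self _ ENNReal.toReal_nonneg)).trans
    ENNReal.ofReal_toReal_le

variable {Ω ι : Type*} [MeasurableSpace Ω] [Fintype ι] {μ : Measure Ω} {Y : ι → Ω → ℝ} {L : ℝ}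

lemma integrable_sq_selfNormalizedSum [IsFiniteMeasure μ] (hY : ∀ i, AEMeasurable (Y i) μ) :
    Integrable (fun ω => selfNormalizedSum (fun i => Y i ω) ^ 2) μ := by
  have hmeas : AEMeasurable (fun ω => selfNormalizedSum (fun i => Y i ω) ^ 2) μ := by fun_prop
  refine Integrable.of_bound hmeas.aestronglyMeasurable (Fintype.card ι) (ae_of_all _ fun ω => ?_)
  rw [Real.norm_of_nonneg (sq_nonneg _)]
  exact sq_selfNormalizedSum_le_card _

lemma sq_sum_integral_le [IsFiniteMeasure μ] (hY : ∀ i, MemLp (Y i) 2 μ) :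
    (∑ i, μ[Y i]) ^ 2
      ≤ (∫ ω, selfNormalizedSum (fun i => Y i ω) ^ 2 ∂μ) * ∑ i, ∫ ω, Y i ω ^ 2 ∂μ := by
  have hint (i : ι) : Integrable (Y i) μ := (hY i).integrable one_le_two
  rw [← integral_finsetSum _ fun i _ => hint i,
    ← integral_finsetSum _ fun i _ => (hY i).integrable_sq]
  exact sq_integral_le_integral_mul_integral (integrable_finsetSum _ fun i _ => hint i)
    (integrable_finsetSum _ fun i _ => (hY i).integrable_sq)
    (integrable_sq_selfNormalizedSum fun i => (hY i).aemeasurable)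
    (fun ω => Finset.sum_nonneg fun i _ => sq_nonneg (Y i ω)) (fun ω => sq_nonneg _)
    fun ω => (sq_sum_eq_sq_selfNormalizedSum_mul _).le

variable [IsProbabilityMeasure μ]

lemma one_le_lintegral_ofReal_sq_selfNormalizedSum (hY : ∀ i, MemLp (Y i) 2 μ)
    (hlt : 2 * (1 + L) * ∑ i, ∫ ω, Y i ω ^ 2 ∂μ < (∑ i, μ[Y i]) ^ 2) :
    1 ≤ ∫⁻ ω, ENNReal.ofReal (selfNormalizedSum (fun i => Y i ω) ^ 2 / 2 - L) ∂μ := by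
  have hint := (integrable_sq_selfNormalizedSum fun i => (hY i).aemeasurable).div_const 2
  have hsecond : 0 ≤ ∑ i, ∫ ω, Y i ω ^ 2 ∂μ :=
    Finset.sum_nonneg fun i _ => integral_nonneg fun ω => sq_nonneg (Y i ω)
  have hmean : 2 * (1 + L) < ∫ ω, selfNormalizedSum (fun i => Y i ω) ^ 2 ∂μ :=
    lt_of_mul_lt_mul_right (hlt.trans_le (sq_sum_integral_le hY)) hsecond
  refine le_trans ?_ (ofReal_integral_le_lintegral_ofReal (hint.sub (integrable_const L)))
  rw [integral_sub hint (integrable_const L), integral_div, integral_const, probReal_univ,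
    one_smul, ENNReal.one_le_ofReal]
  linarith

lemma integral_sq_const_sub {X : Ω → ℝ} (hX : MemLp X 2 μ) (a : ℝ) :
    ∫ ω, (a - X ω) ^ 2 ∂μ = (a - μ[X]) ^ 2 + Var[X; μ] := by
  have hvar : Var[fun ω => a - X ω; μ] = ∫ ω, (a - X ω) ^ 2 ∂μ - (∫ ω, (a - X ω) ∂μ) ^ 2 :=
    variance_eq_sub ((memLp_const a).sub hX)
  have hmean : ∫ ω, (a - X ω) ∂μ = a - μ[X] := by
    rw [integral_sub (integrable_const a) (hX.integrable one_le_two), integral_const,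
      probReal_univ, one_smul]
  rw [variance_const_sub hX.aestronglyMeasurable, hmean] at hvar
  linarith

theorem measure_sq_sum_sub_integral_gt_le (hY : ∀ i, MemLp (Y i) 2 μ) (hindep : iIndepFun Y μ)
    (hL : 0 ≤ L) :
    μ {ω | 2 * (1 + L) * ∑ i, ((Y i ω - μ[Y i]) ^ 2 + Var[Y i; μ])
        < (∑ i, (Y i ω - μ[Y i])) ^ 2}
      ≤ ENNReal.ofReal (2 * Real.exp (-L)) := by
  have hY_meas (i : ι) : AEMeasurable (Y i) μ := (hY i).aemeasurable
  have (i : ι) : IsProbabilityMeasure (μ.map (Y i)) := Measure.isProbabilityMeasure_map (hY_meas i)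
  have hlaw := hasLaw_sub_independent_copy hY_meas hindep
  set F : (ι → ℝ) → ENNReal := fun d => ENNReal.ofReal (selfNormalizedSum d ^ 2 / 2 - L)
  have hF : Measurable F := by fun_prop
  have hFd : AEMeasurable (fun z : Ω × Ω => F fun i => Y i z.1 - Y i z.2) (μ.prod μ) :=
    hF.comp_aemeasurable hlaw.aemeasurable
  calc _ ≤ μ {ω | 1 ≤ ∫⁻ ω', F (fun i => Y i ω - Y i ω') ∂μ} := by
        refine measure_mono fun ω hω => ?_
        refine one_le_lintegral_ofReal_sq_selfNormalizedSum
          (fun i => (memLp_const (Y i ω)).sub (hY i)) ?_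
        have hmean (i : ι) : ∫ ω', (Y i ω - Y i ω') ∂μ = Y i ω - μ[Y i] := by
          rw [integral_sub (integrable_const _) ((hY i).integrable one_le_two)]
          simp
        simp only [Set.mem_ofPred_eq] at hω
        simpa only [Pi.sub_apply, hmean, integral_sq_const_sub (hY _)] using hω
    _ ≤ ∫⁻ ω, ∫⁻ ω', F (fun i => Y i ω - Y i ω') ∂μ ∂μ := by
        simpa only [one_mul] using mul_meas_ge_le_lintegral₀ hFd.lintegral_prod_right' 1
    _ = ∫⁻ d, F d ∂Measure.pi fun i => symmetrizedLaw (μ.map (Y i)) := by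
        rw [← lintegral_prod _ hFd, ← hlaw.lintegral_comp hF.aemeasurable]
    _ ≤ ENNReal.ofReal (2 * Real.exp (-L)) := lintegral_ofReal_sq_selfNormalizedSum_le _ hL

lemma sq_sub_add_variance_le {X : Ω → ℝ} (hX : MemLp X 2 μ) (a : ℝ) :
    (a - μ[X]) ^ 2 + Var[X; μ] ≤ 2 * (a ^ 2 + ∫ ω, X ω ^ 2 ∂μ) := by
  have hvar : Var[X; μ] = ∫ ω, X ω ^ 2 ∂μ - μ[X] ^ 2 := variance_eq_sub hX
  linarith [sq_nonneg (a + μ[X]), variance_nonneg X μ]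

lemma measure_abs_average_sub_gt_le [Nonempty ι] (hY : ∀ i, MemLp (Y i) 2 μ)
    (hindep : iIndepFun Y μ) {e V : ℝ} (hmean : ∀ i, μ[Y i] = e)
    (hsecond : ∀ i, ∫ ω, Y i ω ^ 2 ∂μ ≤ V) (hL : 0 ≤ L) :
    μ {ω | 2 * √((1 + L) * (1 / (Fintype.card ι : ℝ) * ∑ i, Y i ω ^ 2 + V) / Fintype.card ι)
        < |1 / (Fintype.card ι : ℝ) * ∑ i, Y i ω - e|}
      ≤ ENNReal.ofReal (2 * Real.exp (-L)) := by
  refine (measure_mono fun ω hω => ?_).trans (measure_sq_sum_sub_integral_gt_le hY hindep hL)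
  set n := (Fintype.card ι : ℝ)
  have hn : 0 < n := Nat.cast_pos.2 Fintype.card_pos
  have hsum : ∑ i, (Y i ω - μ[Y i]) = n * (1 / n * ∑ i, Y i ω - e) := by
    simp only [hmean, Finset.sum_sub_distrib, Finset.sum_const, Finset.card_univ, nsmul_eq_mul]
    change _ - n * e = _
    field_simp
  have hnorm : ∑ i, ((Y i ω - μ[Y i]) ^ 2 + Var[Y i; μ])
      ≤ 2 * n * (1 / n * ∑ i, Y i ω ^ 2 + V) := by
    calc ∑ i, ((Y i ω - μ[Y i]) ^ 2 + Var[Y i; μ]) ≤ ∑ i, 2 * (Y i ω ^ 2 + V) := by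
          gcongr with i
          exact (sq_sub_add_variance_le (hY i) _).trans (by linarith [hsecond i])
      _ = 2 * n * (1 / n * ∑ i, Y i ω ^ 2 + V) := by
          rw [← Finset.mul_sum, Finset.sum_add_distrib, Finset.sum_const, Finset.card_univ,
            nsmul_eq_mul]
          change 2 * (_ + n * V) = _
          field_simp
  have hsq : 4 * ((1 + L) * (1 / n * ∑ i, Y i ω ^ 2 + V) / n)
      < (1 / n * ∑ i, Y i ω - e) ^ 2 := by
    have := Real.lt_sq_of_sqrt_lt ((lt_div_iff₀' two_pos).2 hω)
    rw [div_pow, sq_abs] at this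
    linarith
  calc _ ≤ 2 * (1 + L) * (2 * n * (1 / n * ∑ i, Y i ω ^ 2 + V)) := by gcongr
    _ = n ^ 2 * (4 * ((1 + L) * (1 / n * ∑ i, Y i ω ^ 2 + V) / n)) := by field_simp; ring
    _ < n ^ 2 * (1 / n * ∑ i, Y i ω - e) ^ 2 := by gcongr
    _ = (∑ i, (Y i ω - μ[Y i])) ^ 2 := by rw [hsum, mul_pow]

end Deviation

section Holder

variable {X : Type*} [MeasurableSpace X] {ν : Measure X} {f g : X → ℝ} {p q : ℝ}

lemma memLp_ofReal_of_integrable_rpow (hg : AEStronglyMeasurable g ν) (hg_nonneg : ∀ x, 0 ≤ g x)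
    (hp : 0 < p) (hgp : Integrable (fun x => g x ^ p) ν) : MemLp g (ENNReal.ofReal p) ν := by
  rw [← integrable_norm_rpow_iff hg (ENNReal.ofReal_pos.2 hp).ne' ENNReal.ofReal_ne_top,
    ENNReal.toReal_ofReal hp.le]
  simpa only [Real.norm_of_nonneg (hg_nonneg _)] using hgp

lemma integrable_withDensity_ofReal_of_memLp (hpq : p.HolderConjugate q) (hf : Measurable f)
    (hf_nonneg : ∀ x, 0 ≤ f x) (hfq : MemLp f (ENNReal.ofReal q) ν)
    (hgp : MemLp g (ENNReal.ofReal p) ν) :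
    Integrable g (ν.withDensity fun x => ENNReal.ofReal (f x)) := by
  have := hpq.symm.ennrealOfReal
  rw [integrable_withDensity_iff_integrable_smul' hf.ennreal_ofReal
    (ae_of_all _ fun x => ENNReal.ofReal_lt_top)]
  simp only [ENNReal.toReal_ofReal (hf_nonneg _), smul_eq_mul]
  exact hfq.integrable_mul hgp

lemma integral_withDensity_ofReal_le (hpq : p.HolderConjugate q) (hf : Measurable f)
    (hf_nonneg : ∀ x, 0 ≤ f x) (hfq : MemLp f (ENNReal.ofReal q) ν)
    (hg_nonneg : ∀ x, 0 ≤ g x) (hgp : MemLp g (ENNReal.ofReal p) ν) :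
    ∫ x, g x ∂ν.withDensity (fun x => ENNReal.ofReal (f x))
      ≤ (∫ x, g x ^ p ∂ν) ^ (1 / p) * (∫ x, f x ^ q ∂ν) ^ (1 / q) := by
  rw [integral_withDensity_eq_integral_toReal_smul hf.ennreal_ofReal
    (ae_of_all _ fun x => ENNReal.ofReal_lt_top)]
  simp only [ENNReal.toReal_ofReal (hf_nonneg _), smul_eq_mul, mul_comm (f _)]
  exact integral_mul_le_Lp_mul_Lq_of_nonneg hpq (ae_of_all _ hg_nonneg) (ae_of_all _ hf_nonneg)
    hgp hfq

lemma sq_rpow_eq_abs_rpow_two_mul (x p : ℝ) : (x ^ 2) ^ p = |x| ^ (2 * p) := by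
  rw [Real.rpow_mul (abs_nonneg x), Real.rpow_two, sq_abs]

lemma memLp_sq_of_integrable_abs_rpow (hg : AEStronglyMeasurable g ν) (hp : 0 < p)
    (hgp : Integrable (fun x => |g x| ^ (2 * p)) ν) :
    MemLp (fun x => g x ^ 2) (ENNReal.ofReal p) ν :=
  memLp_ofReal_of_integrable_rpow (hg.pow 2) (fun x => sq_nonneg (g x)) hp
    (by simpa only [sq_rpow_eq_abs_rpow_two_mul] using hgp)

lemma integral_sq_withDensity_ofReal_le {a b c : ℝ} (hpq : p.HolderConjugate q) (hf : Measurable f)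
    (hf_nonneg : ∀ x, 0 ≤ f x) (hfq : MemLp f (ENNReal.ofReal q) ν)
    (hgp : MemLp (fun x => g x ^ 2) (ENNReal.ofReal p) ν)
    (hga : (∫ x, |g x| ^ (2 * p) ∂ν) ^ (1 / p) ≤ a * b) (hfc : (∫ x, f x ^ q ∂ν) ^ (1 / q) ≤ c) :
    ∫ x, g x ^ 2 ∂ν.withDensity (fun x => ENNReal.ofReal (f x)) ≤ a * c * b := by
  have hfq_nonneg : 0 ≤ (∫ x, f x ^ q ∂ν) ^ (1 / q) :=
    Real.rpow_nonneg (integral_nonneg fun x => Real.rpow_nonneg (hf_nonneg x) q) _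
  have hgp_nonneg : 0 ≤ (∫ x, |g x| ^ (2 * p) ∂ν) ^ (1 / p) := by positivity
  calc _ ≤ (∫ x, |g x| ^ (2 * p) ∂ν) ^ (1 / p) * (∫ x, f x ^ q ∂ν) ^ (1 / q) := by
        simpa only [sq_rpow_eq_abs_rpow_two_mul] using
          integral_withDensity_ofReal_le hpq hf hf_nonneg hfq (fun x => sq_nonneg (g x)) hgp
    _ ≤ a * b * c := mul_le_mul hga hfc hfq_nonneg (hgp_nonneg.trans hga)
    _ = a * c * b := mul_right_comm a b c

end Holder

section UnionBound

lemma one_sub_sum_le_measure_forall {Ω κ : Type*} [MeasurableSpace Ω] [Fintype κ] {μ : Measure Ω}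
    [IsProbabilityMeasure μ] {s : κ → Ω → Prop} {δ : κ → ENNReal}
    (hδ : ∀ k, μ {ω | ¬ s k ω} ≤ δ k) :
    1 - ∑ k, δ k ≤ μ {ω | ∀ k, s k ω} := by
  rw [tsub_le_iff_right]
  calc 1 = μ ({ω | ∀ k, s k ω} ∪ ⋃ k, {ω | ¬ s k ω}) := by
        rw [← measure_univ (μ := μ)]
        congr 1
        ext ω
        by_cases h : ∀ k, s k ω <;> simp_all
    _ ≤ μ {ω | ∀ k, s k ω} + ∑ k, μ {ω | ¬ s k ω} :=
        (measure_union_le _ _).trans (by gcongr; exact measure_iUnion_fintype_le _ _)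
    _ ≤ μ {ω | ∀ k, s k ω} + ∑ k, δ k := by gcongr with k; exact hδ k

variable {Ω X ι κ : Type*} [MeasurableSpace Ω] [MeasurableSpace X] [Fintype ι] [Nonempty ι]
  {μ : Measure Ω} {P : Measure X} {ξ : ι → Ω → X}

lemma measure_abs_average_comp_sub_gt_le [IsProbabilityMeasure μ] (hξ : ∀ i, HasLaw (ξ i) P μ)
    (hindep : iIndepFun ξ μ) {g : X → ℝ} (hg : Measurable g)
    (hg_sq : Integrable (fun x => g x ^ 2) P) {V : ℝ} (hV : ∫ x, g x ^ 2 ∂P ≤ V) {L : ℝ}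
    (hL : 0 ≤ L) :
    μ {ω | 2 * √((1 + L) * (1 / (Fintype.card ι : ℝ) * ∑ i, g (ξ i ω) ^ 2 + V) / Fintype.card ι)
        < |1 / (Fintype.card ι : ℝ) * ∑ i, g (ξ i ω) - ∫ x, g x ∂P|}
      ≤ ENNReal.ofReal (2 * Real.exp (-L)) := by
  have hg_memLp : MemLp g 2 P := (memLp_two_iff_integrable_sq hg.aestronglyMeasurable).2 hg_sq
  refine measure_abs_average_sub_gt_le (Y := fun i => g ∘ ξ i) (fun i => ?_)
    (hindep.comp _ fun _ => hg) (fun i => (hξ i).integral_comp hg.aestronglyMeasurable)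
    (fun i => ?_) hL
  · rw [← (hξ i).map_eq] at hg_memLp
    exact hg_memLp.comp_of_map (hξ i).aemeasurable
  · exact ((hξ i).integral_comp hg_sq.aestronglyMeasurable).trans_le hV

theorem empirical_deviation_bound_general [Fintype κ] (ν : Measure X) (f : X → ℝ)
    (hf_nonneg : ∀ x, 0 ≤ f x) (hf_meas : Measurable f)
    (hP : P = ν.withDensity (fun x => ENNReal.ofReal (f x)))
    (hξ : ∀ i, HasLaw (ξ i) P μ) (hindep : iIndepFun ξ μ)
    (fk : κ → X → ℝ) (hfk_meas : ∀ k, Measurable (fk k))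
    (p q : ℝ) (hpq : p.HolderConjugate q) (ck : κ → ℝ) (c : ℝ)
    (hint1 : ∀ k, Integrable (fun x => |fk k x| ^ (2 * p)) ν)
    (hint2 : Integrable (fun x => f x ^ q) ν)
    (hHk : ∀ k, (∫ x, |fk k x| ^ (2 * p) ∂ν) ^ (1 / p) ≤ ck k * ∫ x, fk k x ^ 2 ∂ν)
    (hHf : (∫ x, f x ^ q ∂ν) ^ (1 / q) ≤ c) (ε : ℝ) (hε : 0 < ε) :
    1 - ENNReal.ofReal ε ≤
      μ {ω | ∀ k, |1 / (Fintype.card ι : ℝ) * ∑ i, fk k (ξ i ω) - ∫ x, fk k x ∂P|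
        ≤ 2 * √((1 + Real.log (2 * Fintype.card κ / ε))
          * (1 / (Fintype.card ι : ℝ) * ∑ i, fk k (ξ i ω) ^ 2
            + ck k * c * ∫ x, fk k x ^ 2 ∂ν) / Fintype.card ι)} := by
  have := hindep.isProbabilityMeasure
  rcases le_or_gt 1 ε with hε_one | hε_one
  · rw [tsub_eq_zero_of_le (ENNReal.one_le_ofReal.2 hε_one)]
    exact zero_le
  have hf_memLp : MemLp f (ENNReal.ofReal q) ν :=
    memLp_ofReal_of_integrable_rpow hf_meas.aestronglyMeasurable hf_nonneg hpq.symm.pos hint2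
  have hfk_memLp (k : κ) : MemLp (fun x => fk k x ^ 2) (ENNReal.ofReal p) ν :=
    memLp_sq_of_integrable_abs_rpow (hfk_meas k).aestronglyMeasurable hpq.pos (hint1 k)
  have hsplit : ∑ _ : κ, ENNReal.ofReal ε / Fintype.card κ ≤ ENNReal.ofReal ε := by
    rw [Finset.sum_const, Finset.card_univ, nsmul_eq_mul]
    exact ENNReal.mul_div_le
  refine (tsub_le_tsub_left hsplit 1).trans (one_sub_sum_le_measure_forall fun k => ?_)
  have hcard : (1 : ℝ) ≤ Fintype.card κ := Nat.one_le_cast.2 (Fintype.card_pos_iff.2 ⟨k⟩)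
  have hL : 0 ≤ Real.log (2 * Fintype.card κ / ε) :=
    Real.log_nonneg ((one_le_div hε).2 (by linarith))
  have hexp : ENNReal.ofReal (2 * Real.exp (-Real.log (2 * Fintype.card κ / ε)))
      = ENNReal.ofReal ε / Fintype.card κ := by
    rw [Real.exp_neg, Real.exp_log (by positivity), ← ENNReal.ofReal_natCast (Fintype.card κ),
      ← ENNReal.ofReal_div_of_pos (by positivity)]
    congr 1
    field_simp
  rw [← hexp]
  simp only [not_le]
  refine measure_abs_average_comp_sub_gt_le hξ hindep (hfk_meas k) ?_ ?_ hL
  · rw [hP]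
    exact integrable_withDensity_ofReal_of_memLp hpq hf_meas hf_nonneg hf_memLp (hfk_memLp k)
  · rw [hP]
    exact integral_sq_withDensity_ofReal_le hpq hf_meas hf_nonneg hf_memLp (hfk_memLp k) (hHk k) hHf

end UnionBound

/-- Main empirical deviation bound: under condition H(p), with probability at least `1 - ε`,
simultaneously for all `k`,
`|(1/N)∑ f_k(X_i) - E[f_k(X)]| ≤ 2√((1+log(2m/ε))((1/N)∑ f_k(X_i)² + C_k D_k)/N)`. -/
theorem empirical_deviation_bound
    {X : Type*} [MeasurableSpace X] (ν : Measure X) [SigmaFinite ν]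
    (f : X → ℝ) (hf_nonneg : ∀ x, 0 ≤ f x) (hf_meas : Measurable f)
    (P : Measure X) (hP : P = ν.withDensity (fun x => ENNReal.ofReal (f x)))
    [IsProbabilityMeasure P]
    (m N : ℕ) (hm : 0 < m) (hN : 0 < N)
    (fk : Fin m → X → ℝ) (hfk_meas : ∀ k, Measurable (fk k))
    (p q : ℝ) (hp : 1 < p) (hq : 1 < q) (hpq : 1 / p + 1 / q = 1)
    (ck : Fin m → ℝ) (c : ℝ) (hck : ∀ k, 0 < ck k) (hc : 0 < c)
    (hint1 : ∀ k, Integrable (fun x => |fk k x| ^ (2 * p)) ν)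
    (hint2 : Integrable (fun x => (f x) ^ q) ν)
    (hfk2 : ∀ k, Integrable (fun x => (fk k x) ^ 2) ν)
    (hHk : ∀ k, (∫ x, |fk k x| ^ (2 * p) ∂ν) ^ (1 / p) ≤ ck k * ∫ x, |fk k x| ^ (2 : ℝ) ∂ν)
    (hHf : (∫ x, (f x) ^ q ∂ν) ^ (1 / q) ≤ c)
    (ε : ℝ) (hε : 0 < ε) :
    (Measure.pi fun _ : Fin N => P)
      {ω : Fin N → X | ∀ k : Fin m,
        |(1 / (N : ℝ)) * ∑ i, fk k (ω i) - ∫ x, fk k x ∂P|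
          ≤ 2 * Real.sqrt ((1 + Real.log (2 * m / ε))
              * ((1 / (N : ℝ)) * ∑ i, (fk k (ω i)) ^ 2
                  + (ck k * c) * ∫ x, (fk k x) ^ 2 ∂ν) / N)}
      ≥ 1 - ENNReal.ofReal ε := by
  have : Nonempty (Fin N) := Fin.pos_iff_nonempty.1 hN
  simpa only [Fintype.card_fin] using empirical_deviation_bound_general ν f hf_nonneg hf_meas hP
    (fun i => (measurePreserving_eval (fun _ : Fin N => P) i).hasLaw)
    (iIndepFun_pi fun _ => aemeasurable_id) fk hfk_meas p q
    (Real.holderConjugate_iff.2 ⟨hp, by simpa using hpq⟩) ck c hint1 hint2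
    (by simpa using hHk) hHf ε hε
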